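/- Under the independence-of-resampled-tokens assumption, the autoregressive distribution marginalized over the coordinates in L factorizes over the remaining positions: for every z ∈ V^n, the sum of P(y) over all y ∈ V^n with y_i = z_i for all i ∉ L equals ∏_{i∉L} p_i(z_1,…,z_{i−1})(z_i). -/

import Mathlib

/-!
The one-coordinate invariance in the hypothesis chains: changing the coordinates in `L` one at a
time shows that `p i (prefixOf y i)` depends only on `y` outside `L`
(`IndepResampledTokens.apply_prefixOf_eq`). Hence every summand equals `∏ i, p i (prefixOf z i) (y i)`
with prefixes frozen at `z`, and the sum, which runs over a product set, becomes the product over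
`i` of coordinate sums. For `i ∈ L` the sum is the total mass `1` of a probability
distribution; for `i ∉ L` it is the single term at `z i`.
-/

/-- The prefix `(x_1, …, x_{i-1})` of a sequence `x ∈ V^n`, i.e. the restriction of `x`
to the positions strictly before `i`. -/
def prefixOf {V : Type*} {n : ℕ} (x : Fin n → V) (i : Fin n) : Fin i → V :=
  fun l => x ⟨l, l.isLt.trans i.isLt⟩

/-- **Independence of resampled tokens** (Assumption 3.1): for every `j ∈ L`, every
position `i > j`, and any two prefixes `w, w'` of length `i` agreeing everywhere except
possibly at position `j`, the conditional next-token distributions agree: `p i w = p i w'`. -/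
def IndepResampledTokens {V : Type*} {n : ℕ}
    (p : (i : Fin n) → (Fin i → V) → PMF V) (L : Finset (Fin n)) : Prop :=
  ∀ j ∈ L, ∀ i : Fin n, j < i → ∀ w w' : Fin i → V,
    (∀ l : Fin i, (l : ℕ) ≠ (j : ℕ) → w l = w' l) → p i w = p i w'

/-- The next-token distributions do not change when a sequence is modified on any set `S ⊆ L`
of resampled positions; by induction on `S`, replacing one coordinate at a time. -/
theorem IndepResampledTokens.apply_prefixOf_eq {V : Type*} {n : ℕ}
    {p : (i : Fin n) → (Fin i → V) → PMF V} {L : Finset (Fin n)}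
    (hp : IndepResampledTokens p L) (i : Fin n) (S : Finset (Fin n)) (hS : S ⊆ L)
    (x y : Fin n → V) (hxy : ∀ j ∉ S, x j = y j) :
    p i (prefixOf x i) = p i (prefixOf y i) := by
  induction S using Finset.induction_on generalizing x with
  | empty =>
    have hEq : x = y := funext fun j => hxy j (Finset.notMem_empty j)
    rw [hEq]
  | insert a S _ ih =>
    have hstep : p i (prefixOf x i) = p i (prefixOf (Function.update x a (y a)) i) := by
      have hne : ∀ l : Fin i, (l : ℕ) ≠ (a : ℕ) →
          prefixOf x i l = prefixOf (Function.update x a (y a)) i l := by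
        intro l hl
        have hla : (⟨l, l.isLt.trans i.isLt⟩ : Fin n) ≠ a := fun h => hl (congrArg Fin.val h)
        simp [prefixOf, Function.update_of_ne hla]
      by_cases hai : a < i
      · exact hp a (hS (Finset.mem_insert_self a S)) i hai _ _ hne
      · -- A position `a ≥ i` lies outside the prefix, so the prefixes coincide.
        congr 1
        funext l
        refine hne l fun h => hai ?_
        rw [Fin.lt_def, ← h]
        exact l.isLt
    rw [hstep]
    refine ih ((Finset.subset_insert a S).trans hS) _ fun j hj => ?_
    by_cases hja : j = a
    · subst hja
      simp
    · rw [Function.update_of_ne hja]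
      exact hxy j (by simp [hja, hj])

/-- Under the independence-of-resampled-tokens assumption, the autoregressive
distribution marginalized over the coordinates in `L` factorizes over the remaining
positions: for every `z ∈ V^n`, the sum of `P(y) = ∏_i p_i(y_{<i})(y_i)` over all
`y ∈ V^n` with `y_i = z_i` for all `i ∉ L` equals `∏_{i∉L} p_i(z_{<i})(z_i)`. -/
theorem marginal_over_resampled_factorizes
    {V : Type*} [Fintype V] [Nonempty V] [DecidableEq V] {n : ℕ}
    (p : (i : Fin n) → (Fin i → V) → PMF V) (L : Finset (Fin n))
    (hp : IndepResampledTokens p L) (z : Fin n → V) :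
    (∑ y ∈ Finset.univ.filter (fun y : Fin n → V => ∀ i ∉ L, y i = z i),
        ∏ i : Fin n, p i (prefixOf y i) (y i))
      = ∏ i ∈ Lᶜ, p i (prefixOf z i) (z i) := by
  -- The sequences agreeing with `z` off `L` form a product set.
  have hset : Finset.univ.filter (fun y : Fin n → V => ∀ i ∉ L, y i = z i)
      = Fintype.piFinset (fun i => if i ∈ L then Finset.univ else {z i}) := by
    ext y
    simp only [Finset.mem_filter, Finset.mem_univ, true_and, Fintype.mem_piFinset]
    refine forall_congr' fun i => ?_
    by_cases hi : i ∈ L <;> simp [hi]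
  calc
    _ = ∑ y ∈ Finset.univ.filter (fun y : Fin n → V => ∀ i ∉ L, y i = z i),
          ∏ i : Fin n, p i (prefixOf z i) (y i) := by
      refine Finset.sum_congr rfl fun y hy => Finset.prod_congr rfl fun i _ => ?_
      rw [hp.apply_prefixOf_eq i L subset_rfl y z (Finset.mem_filter.mp hy).2]
    _ = ∏ i : Fin n, ∑ v ∈ (if i ∈ L then Finset.univ else {z i}),
          p i (prefixOf z i) v := by
      rw [hset, Finset.prod_univ_sum]
    _ = ∏ i ∈ Lᶜ, p i (prefixOf z i) (z i) := by
      symm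
      have hout : ∀ i ∈ Lᶜ, p i (prefixOf z i) (z i)
          = ∑ v ∈ (if i ∈ L then Finset.univ else {z i}), p i (prefixOf z i) v := by
        intro i hi
        simp [Finset.mem_compl.mp hi]
      rw [Finset.prod_congr rfl hout]
      refine Finset.prod_subset (Finset.subset_univ _) fun i _ hi => ?_
      have hiL : i ∈ L := by simpa using hi
      rw [if_pos hiL, ← tsum_fintype (L := .unconditional V), PMF.tsum_coe]
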